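/- arXiv:1909.04484 — 2 statements merged into one kernel-verified Lean document; each statement's English description precedes it below -/
import Mathlib

section
/- For every β ≥ 2 one has 1/4 ≤ (β − 1)/(2β) ≤ E(β) ≤ 1/2, and E(β) = 1/2 if and only if β is an integer (in particular E(β) < 1/2 whenever β is not an integer). -/
/-- The orbit of `1` under the β-map `T_β(x) = βx mod 1`: `t₀ = 1`,
`t_{n+1} = β t_n − ⌊β t_n⌋`. -/
noncomputable def betaOrbit (β : ℝ) : ℕ → ℝ
  | 0 => 1
  | n + 1 => Int.fract (β * betaOrbit β n)

/-- `E(β) = (∑ t_n(β)²/(2βⁿ)) / (∑ t_n(β)/βⁿ)`, the expectation of the unique acim of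
the β-map. -/
noncomputable def Ebeta (β : ℝ) : ℝ :=
  (∑' n : ℕ, (betaOrbit β n) ^ 2 / (2 * β ^ n)) / (∑' n : ℕ, betaOrbit β n / β ^ n)

/-- `ψ^ε(β) = 2 + ε F(1/E(β) − 2)`. -/
noncomputable def psi (ε : ℝ) (F : ℝ → ℝ) (β : ℝ) : ℝ :=
  2 + ε * F (1 / Ebeta β - 2)

theorem betaOrbit_mem (β : ℝ) (n : ℕ) : 0 ≤ betaOrbit β n ∧ betaOrbit β n ≤ 1 := by
  cases n with
  | zero => simp [betaOrbit]
  | succ n =>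
    simp only [betaOrbit]
    exact ⟨Int.fract_nonneg _, (Int.fract_lt_one _).le⟩

/-- Uniform bounds on `E(β)`: `1/4 ≤ (β−1)/(2β) ≤ E(β) ≤ 1/2`, with equality
`E(β) = 1/2` iff `β` is an integer. -/
theorem stmt13 (β : ℝ) (hβ : 2 ≤ β) :
    1/4 ≤ (β - 1) / (2 * β) ∧ (β - 1) / (2 * β) ≤ Ebeta β ∧ Ebeta β ≤ 1/2 ∧
      (Ebeta β = 1/2 ↔ ∃ n : ℤ, β = (n : ℝ)) := by
  have hb0 : (0:ℝ) < β := by linarith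
  have hp : ∀ n : ℕ, (0:ℝ) < β ^ n := fun n => pow_pos hb0 n
  have hr0 : (0:ℝ) ≤ β⁻¹ := inv_nonneg.mpr hb0.le
  have hr1 : β⁻¹ < 1 := inv_lt_one_of_one_lt₀ (by linarith)
  have hgeo := hasSum_geometric_of_lt_one hr0 hr1
  have hle1 : ∀ n, betaOrbit β n / β ^ n ≤ β⁻¹ ^ n := by
    intro n
    rw [inv_pow, div_eq_mul_inv]
    exact mul_le_of_le_one_left (inv_nonneg.mpr (hp n).le) (betaOrbit_mem β n).2
  have hD0 : ∀ n, 0 ≤ betaOrbit β n / β ^ n := fun n =>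
    div_nonneg (betaOrbit_mem β n).1 (hp n).le
  have hN0 : ∀ n, 0 ≤ betaOrbit β n ^ 2 / (2 * β ^ n) := fun n =>
    div_nonneg (sq_nonneg _) (by linarith [hp n])
  have hDs : Summable fun n => betaOrbit β n / β ^ n :=
    Summable.of_nonneg_of_le hD0 hle1 hgeo.summable
  have key : ∀ n, (betaOrbit β n / β ^ n) / 2 - betaOrbit β n ^ 2 / (2 * β ^ n)
      = betaOrbit β n * (1 - betaOrbit β n) / (2 * β ^ n) := by
    intro n
    have := (hp n).ne'
    field_simp
  have hND : ∀ n, betaOrbit β n ^ 2 / (2 * β ^ n) ≤ (betaOrbit β n / β ^ n) / 2 := by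
    intro n
    have h := betaOrbit_mem β n
    have : 0 ≤ betaOrbit β n * (1 - betaOrbit β n) / (2 * β ^ n) :=
      div_nonneg (mul_nonneg h.1 (by linarith)) (by linarith [hp n])
    linarith [key n]
  have hNs : Summable fun n => betaOrbit β n ^ 2 / (2 * β ^ n) :=
    Summable.of_nonneg_of_le hN0 hND (hDs.div_const 2)
  have hD1 : 1 ≤ ∑' n : ℕ, betaOrbit β n / β ^ n := by
    have := hDs.le_tsum 0 (fun n _ => hD0 n)
    simpa [betaOrbit] using this
  have hN1 : 1 / 2 ≤ ∑' n : ℕ, betaOrbit β n ^ 2 / (2 * β ^ n) := by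
    have := hNs.le_tsum 0 (fun n _ => hN0 n)
    simpa [betaOrbit] using this
  have hDu : ∑' n : ℕ, betaOrbit β n / β ^ n ≤ β / (β - 1) := by
    have h := hDs.tsum_le_tsum hle1 hgeo.summable
    rw [hgeo.tsum_eq] at h
    have e : (1 - β⁻¹)⁻¹ = β / (β - 1) := by
      have : β - 1 ≠ 0 := by linarith
      rw [inv_eq_iff_eq_inv, inv_div]
      field_simp
    rwa [e] at h
  have hNDs : ∑' n : ℕ, betaOrbit β n ^ 2 / (2 * β ^ n)
      ≤ (∑' n : ℕ, betaOrbit β n / β ^ n) / 2 := by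
    rw [← tsum_div_const]
    exact hNs.tsum_le_tsum hND (hDs.div_const 2)
  have hDpos : 0 < ∑' n : ℕ, betaOrbit β n / β ^ n := by linarith
  refine ⟨?_, ?_, ?_, ?_, ?_⟩
  · rw [div_le_div_iff₀ (by norm_num) (by linarith)]
    linarith
  · rw [Ebeta, le_div_iff₀ hDpos]
    refine le_trans ?_ hN1
    calc (β - 1) / (2 * β) * ∑' n : ℕ, betaOrbit β n / β ^ n
        ≤ (β - 1) / (2 * β) * (β / (β - 1)) :=
          mul_le_mul_of_nonneg_left hDu (div_nonneg (by linarith) (by linarith))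
      _ = 1 / 2 := by
          have : β - 1 ≠ 0 := by linarith
          field_simp
  · rw [Ebeta, div_le_iff₀ hDpos]
    linarith
  · intro h
    by_contra hn
    have hf : Int.fract β ≠ 0 := by
      intro h0
      exact hn ⟨⌊β⌋, by linarith [Int.floor_add_fract β]⟩
    have hf0 : 0 < Int.fract β := lt_of_le_of_ne (Int.fract_nonneg _) hf.symm
    have hf1 := Int.fract_lt_one β
    have e1 : betaOrbit β 1 = Int.fract β := by simp [betaOrbit]
    have hlt : betaOrbit β 1 ^ 2 / (2 * β ^ 1) < (betaOrbit β 1 / β ^ 1) / 2 := by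
      have : 0 < betaOrbit β 1 * (1 - betaOrbit β 1) / (2 * β ^ 1) := by
        rw [e1]
        exact div_pos (mul_pos hf0 (by linarith)) (by linarith [hp 1])
      linarith [key 1]
    have := Summable.tsum_lt_tsum hND hlt hNs (hDs.div_const 2)
    rw [tsum_div_const] at this
    rw [Ebeta, div_eq_iff hDpos.ne'] at h
    linarith
  · rintro ⟨m, hm⟩
    have hz : ∀ n, betaOrbit β (n + 1) = 0 := by
      intro n
      induction n with
      | zero => simp [betaOrbit, hm]
      | succ n ih => rw [betaOrbit, ih]; simp
    have hsq : ∀ n, betaOrbit β n ^ 2 / (2 * β ^ n) = (betaOrbit β n / β ^ n) / 2 := by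
      intro n
      cases n with
      | zero => simp [betaOrbit]
      | succ n => simp [hz n]
    rw [Ebeta, div_eq_iff hDpos.ne', tsum_congr hsq, tsum_div_const]
    ring
end

section
/- Let 2 < β < 3, set η = β − 2 and N = ⌈log η / log(1/β)⌉ (a positive integer since 0 < η < 1). Then ∑_{n=1}^∞ t_n(β)/βⁿ ≤ N·η + β^{−N}, and consequently 1/2 − E(β) ≤ (1/2)·(N·η + β^{−N}). -/
theorem betaOrbit_nonneg' (β : ℝ) (n : ℕ) : 0 ≤ betaOrbit β n := by
  cases n with
  | zero => simp [betaOrbit]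
  | succ n => simp [betaOrbit]

theorem betaOrbit_le_one' (β : ℝ) (n : ℕ) : betaOrbit β n ≤ 1 := by
  cases n with
  | zero => simp [betaOrbit]
  | succ n => simpa [betaOrbit] using (Int.fract_lt_one _).le

theorem betaOrbit_growth (β : ℝ) (h2 : 2 < β) (h3 : β < 3) (n : ℕ) :
    betaOrbit β (n + 1) ≤ β ^ n * (β - 2) := by
  induction n with
  | zero =>
    have hf : ⌊β⌋ = 2 := by
      rw [Int.floor_eq_iff]; constructor <;> norm_num <;> linarith
    simp [betaOrbit, Int.fract, hf]
  | succ n ih =>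
    have h : betaOrbit β (n + 1 + 1) ≤ β * betaOrbit β (n + 1) := by
      have h0 : (0 : ℝ) ≤ β * betaOrbit β (n + 1) :=
        mul_nonneg (by linarith) (betaOrbit_nonneg' β _)
      have h1 : (0 : ℝ) ≤ (⌊β * betaOrbit β (n + 1)⌋ : ℝ) := by
        exact_mod_cast Int.floor_nonneg.mpr h0
      have h2 : betaOrbit β (n + 1 + 1) =
        β * betaOrbit β (n + 1) - (⌊β * betaOrbit β (n + 1)⌋ : ℝ) := rfl
      linarith
    have h' := mul_le_mul_of_nonneg_left ih (by linarith : (0 : ℝ) ≤ β)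
    calc _ ≤ _ := h
      _ ≤ _ := h'
      _ = _ := by ring

theorem betaOrbit_summable (β : ℝ) (h2 : 2 < β) :
    Summable (fun n : ℕ => betaOrbit β n / β ^ n) := by
  have hb : (0 : ℝ) < β := by linarith
  refine Summable.of_nonneg_of_le
    (fun n => div_nonneg (betaOrbit_nonneg' β n) (pow_nonneg hb.le n)) (fun n => ?_)
    (summable_geometric_two)
  rw [div_pow, one_pow]
  exact div_le_div₀ zero_le_one (betaOrbit_le_one' β n) (by positivity)
    (pow_le_pow_left₀ (by norm_num) h2.le n)

theorem tail_bound (β : ℝ) (h2 : 2 < β) (h3 : β < 3) (M : ℕ) :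
    (∑' n : ℕ, betaOrbit β (n + 1) / β ^ (n + 1)) ≤ (M : ℝ) * (β - 2) + (β ^ M)⁻¹ := by
  have hb : (0 : ℝ) < β := by linarith
  have hs := (summable_nat_add_iff 1).mpr (betaOrbit_summable β h2)
  have hs' := (summable_nat_add_iff M).mpr hs
  rw [← hs.sum_add_tsum_nat_add M]
  apply add_le_add
  · have : ∀ n ∈ Finset.range M, betaOrbit β (n + 1) / β ^ (n + 1) ≤ β - 2 := by
      intro n _
      rw [div_le_iff₀ (by positivity)]
      refine (betaOrbit_growth β h2 h3 n).trans ?_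
      rw [pow_succ]
      have hp : 0 < β ^ n * (β - 2) := mul_pos (by positivity) (by linarith)
      nlinarith
    simpa [mul_sub] using Finset.sum_le_sum this
  · rw [← tsum_geometric_two' ((β ^ M)⁻¹)]
    refine hs'.tsum_le_tsum (fun n => ?_) (summable_geometric_two' _)
    have e : (β ^ M)⁻¹ / 2 / 2 ^ n = 1 / (2 ^ (n + 1) * β ^ M) := by
      rw [pow_succ]; field_simp
    rw [e]
    apply div_le_div₀ zero_le_one (betaOrbit_le_one' β _) (by positivity)
    have : β ^ (n + M + 1) = β ^ (n + 1) * β ^ M := by ring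
    rw [this]
    gcongr

theorem half_sub_E (β : ℝ) (h2 : 2 < β) :
    1/2 - Ebeta β ≤ (1/2) * (∑' n : ℕ, betaOrbit β (n + 1) / β ^ (n + 1)) := by
  have hb : (0 : ℝ) < β := by linarith
  have hs := betaOrbit_summable β h2
  have hq : Summable (fun n : ℕ => (betaOrbit β n) ^ 2 / (2 * β ^ n)) := by
    refine Summable.of_nonneg_of_le (fun n => by positivity) (fun n => ?_) hs
    have h0 := betaOrbit_nonneg' β n
    have h1 := betaOrbit_le_one' β n
    have hp : 0 < β ^ n := by positivity
    apply div_le_div₀ h0 (by nlinarith) hp (by linarith)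
  have hA : 1/2 ≤ ∑' n : ℕ, (betaOrbit β n) ^ 2 / (2 * β ^ n) := by
    have := hq.le_tsum 0 (fun n _ => by positivity)
    simpa [betaOrbit] using this
  have hS : 0 ≤ ∑' n : ℕ, betaOrbit β (n + 1) / β ^ (n + 1) :=
    tsum_nonneg (fun n => div_nonneg (betaOrbit_nonneg' β _) (by positivity))
  have hD : ∑' n : ℕ, betaOrbit β n / β ^ n
      = 1 + ∑' n : ℕ, betaOrbit β (n + 1) / β ^ (n + 1) := by
    rw [hs.tsum_eq_zero_add]; simp [betaOrbit]
  unfold Ebeta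
  rw [hD]
  generalize (∑' n : ℕ, betaOrbit β (n + 1) / β ^ (n + 1)) = S at *
  generalize (∑' n : ℕ, (betaOrbit β n) ^ 2 / (2 * β ^ n)) = A at *
  have : (1 / 2 - 1 / 2 * S) ≤ A / (1 + S) := by
    rw [le_div_iff₀ (by linarith)]
    nlinarith [sq_nonneg S]
  linarith

/-- A quantitative bound on the tail sum `∑_{n≥1} t_n(β)/βⁿ` and on `1/2 − E(β)`. -/
theorem stmt14 (β : ℝ) (h2 : 2 < β) (h3 : β < 3) :
    let η : ℝ := β - 2
    let N : ℤ := ⌈Real.log η / Real.log (1 / β)⌉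
    0 < N ∧
    (∑' n : ℕ, betaOrbit β (n + 1) / β ^ (n + 1)) ≤ (N : ℝ) * η + β ^ (-N) ∧
    1/2 - Ebeta β ≤ (1/2) * ((N : ℝ) * η + β ^ (-N)) := by
  intro η N
  have hN : 0 < N := by
    apply Int.ceil_pos.mpr
    apply div_pos_of_neg_of_neg
    · exact Real.log_neg (by simp only [η]; linarith) (by simp only [η]; linarith)
    · rw [one_div, Real.log_inv]
      have := Real.log_pos (by linarith : 1 < β)
      linarith
  have key : (∑' n : ℕ, betaOrbit β (n + 1) / β ^ (n + 1)) ≤ (N : ℝ) * η + β ^ (-N) := by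
    obtain ⟨M, hM⟩ := Int.eq_ofNat_of_zero_le hN.le
    rw [hM]
    simpa using tail_bound β h2 h3 M
  refine ⟨hN, key, ?_⟩
  have := half_sub_E β h2
  linarith
end
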